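/- Let X be a nonempty compact metric space, f : X → X continuous, and φ : X → ℝ continuous, and assume sup_{μ ∈ M_inv(f)} ∫ φ dμ = 0. Then for every constant a > 0 there exists a positive integer m₀ = m₀(a) such that for all m ≥ m₀ and all x ∈ X, (1/m) S_m f(x) ≤ a/2. -/

import Mathlib

open MeasureTheory Filter

/-!
If some Birkhoff averages of arbitrarily large length were at least `a / 2`, the empirical measures
along the corresponding orbit segments would accumulate, by weak compactness of the probability
measures, at a probability measure `μ`. Applying `f` shifts an orbit segment of length `m` by one
step, which changes its averages by `O(1 / m)`, so `μ` is invariant. As `φ` is continuous,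
`∫ φ dμ ≥ a / 2 > 0`, contradicting the hypothesis on the supremum.
-/

open Topology
open scoped NNReal BoundedContinuousFunction

section BirkhoffAverage

variable {α ι : Type*} {l : Filter ι} {n : ι → ℕ}

theorem birkhoffAverage_comp_self (R : Type*) {M : Type*} [DivisionSemiring R] [AddCommMonoid M]
    [Module R M] (f : α → α) (g : α → M) (n : ℕ) (x : α) :
    birkhoffAverage R f (g ∘ f) n x = birkhoffAverage R f g n (f x) := by
  simp only [birkhoffAverage, birkhoffSum, Function.comp_apply, ← Function.iterate_succ_apply' f,
    Function.iterate_succ_apply]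

theorem tendsto_birkhoffAverage_apply_sub_birkhoffAverage_of_tendsto_atTop (𝕜 : Type*)
    {E : Type*} [RCLike 𝕜] [NormedAddCommGroup E] [NormedSpace 𝕜 E] {g : α → E}
    (hg : Bornology.IsBounded (Set.range g)) (hn : Tendsto n l atTop) (f : α → α) (x : ι → α) :
    Tendsto (fun i ↦ birkhoffAverage 𝕜 f g (n i) (f (x i)) - birkhoffAverage 𝕜 f g (n i) (x i))
      l (𝓝 0) := by
  obtain ⟨C, hC⟩ := Metric.isBounded_range_iff.1 hg
  have hlim : Tendsto (fun i ↦ C / (n i : ℝ)) l (𝓝 0) :=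
    (tendsto_const_div_atTop_nhds_zero_nat C).comp hn
  refine squeeze_zero_norm (fun i ↦ ?_) hlim
  rw [← dist_eq_norm, dist_birkhoffAverage_apply_birkhoffAverage]
  gcongr
  exact hC _ _

end BirkhoffAverage

section EmpiricalMeasure

variable {X ι : Type*} [MeasurableSpace X] {f : X → X} {l : Filter ι} {n : ι → ℕ} {x : ι → X}

/-- The empirical measure `(1/n) ∑_{i < n} δ_{fⁱ x}` of an orbit segment, that is, the Birkhoff
average of the Dirac masses. It is encoded as a finite rather than a probability measure because
it is `0` for `n = 0`. -/
noncomputable def empiricalMeasure (f : X → X) (n : ℕ) (x : X) : FiniteMeasure X :=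
  birkhoffAverage ℝ≥0 f (fun y ↦ (diracProba y).toFiniteMeasure) n x

theorem integral_empiricalMeasure {E : Type*} [NormedAddCommGroup E] [NormedSpace ℝ E]
    [CompleteSpace E] {g : X → E} (hg : StronglyMeasurable g) (f : X → X) (n : ℕ) (x : X) :
    ∫ y, g y ∂(empiricalMeasure f n x : Measure X) = birkhoffAverage ℝ f g n x := by
  have coe_dirac (y : X) : ((diracProba y).toFiniteMeasure : Measure X) = Measure.dirac y := rfl
  simp only [empiricalMeasure, birkhoffAverage, birkhoffSum, FiniteMeasure.toMeasure_smul,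
    FiniteMeasure.toMeasure_sum, integral_smul_nnreal_measure, coe_dirac]
  rw [integral_finsetSum_measure fun i _ ↦ integrable_dirac' hg enorm_lt_top]
  simp [integral_dirac' _ _ hg, NNReal.smul_def]

theorem mass_empiricalMeasure (f : X → X) {n : ℕ} (hn : n ≠ 0) (x : X) :
    (empiricalMeasure f n x).mass = 1 := by
  have h := integral_empiricalMeasure (stronglyMeasurable_const (b := (1 : ℝ))) f n x
  simpa [birkhoffAverage, birkhoffSum, FiniteMeasure.mass, hn] using h

variable [TopologicalSpace X] [BorelSpace X]

theorem exists_mapClusterPt_empiricalMeasure [CompactSpace X] [T2Space X]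
    (f : X → X) (hn : ∃ᶠ i in l, n i ≠ 0) (x : ι → X) :
    ∃ μ : FiniteMeasure X, μ.mass = 1 ∧
      MapClusterPt μ l fun i ↦ empiricalMeasure f (n i) (x i) :=
  (isCompact_setOfPred_finiteMeasure_eq_of_compactSpace X 1).exists_mapClusterPt_of_frequently
    (hn.mono fun i hi ↦ mass_empiricalMeasure f hi (x i))

theorem map_eq_self_of_mapClusterPt_empiricalMeasure [HasOuterApproxClosed X]
    (hf : Continuous f) (hn : Tendsto n l atTop) {μ : FiniteMeasure X}
    (hμ : MapClusterPt μ l fun i ↦ empiricalMeasure f (n i) (x i)) :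
    μ.map f = μ := by
  obtain ⟨U, hUl, hU⟩ := mapClusterPt_iff_ultrafilter.1 hμ
  have tendsto_average (g : X →ᵇ ℝ) :
      Tendsto (fun i ↦ birkhoffAverage ℝ f g (n i) (x i)) U (𝓝 (∫ y, g y ∂(μ : Measure X))) := by
    simpa only [integral_empiricalMeasure g.continuous.stronglyMeasurable] using
      FiniteMeasure.tendsto_iff_forall_integral_tendsto.1 hU g
  refine FiniteMeasure.ext_of_forall_integral_eq fun g ↦ ?_
  have average_shift := tendsto_average (g.compContinuous ⟨f, hf⟩)
  have shift_sub : Tendsto (fun i ↦ birkhoffAverage ℝ f (g ∘ f) (n i) (x i) -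
      birkhoffAverage ℝ f g (n i) (x i)) U (𝓝 0) := by
    simpa only [birkhoffAverage_comp_self] using
      tendsto_birkhoffAverage_apply_sub_birkhoffAverage_of_tendsto_atTop ℝ g.isBounded_range
        (hn.mono_left hUl) f x
  rw [FiniteMeasure.toMeasure_map,
    integral_map hf.aemeasurable g.continuous.aestronglyMeasurable]
  exact sub_eq_zero.1 (tendsto_nhds_unique (average_shift.sub (tendsto_average g)) shift_sub)

end EmpiricalMeasure

section InvariantMeasure

variable {X : Type*} [TopologicalSpace X] [CompactSpace X] [MeasurableSpace X] [BorelSpace X]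
  {f : X → X} {φ : X → ℝ} {c : ℝ}

theorem exists_invariant_le_integral_of_frequently_le_birkhoffAverage [T2Space X]
    [HasOuterApproxClosed X] (hf : Continuous f) (hφ : Continuous φ)
    (h : ∃ᶠ n in atTop, ∃ x, c ≤ birkhoffAverage ℝ f φ n x) :
    ∃ μ : Measure X, IsProbabilityMeasure μ ∧ μ.map f = μ ∧ c ≤ ∫ x, φ x ∂μ := by
  obtain ⟨n, hn, hc⟩ := extraction_of_frequently_atTop h
  choose x hx using hc
  obtain ⟨μ, hμ_mass, hμ⟩ := exists_mapClusterPt_empiricalMeasure f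
    (hn.tendsto_atTop.eventually_ne_atTop 0).frequently x
  obtain ⟨U, -, hU⟩ := mapClusterPt_iff_ultrafilter.1 hμ
  have hφ_lim : Tendsto (fun i ↦ birkhoffAverage ℝ f φ (n i) (x i)) U
      (𝓝 (∫ y, φ y ∂(μ : Measure X))) := by
    simpa only [Function.comp_def, ContinuousMap.coe_mk,
      integral_empiricalMeasure hφ.stronglyMeasurable] using
        ((FiniteMeasure.continuous_integral_continuousMap (⟨φ, hφ⟩ : C(X, ℝ))).tendsto μ).comp hU
  refine ⟨μ, ⟨?_⟩, ?_, ge_of_tendsto' hφ_lim hx⟩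
  · rw [← FiniteMeasure.ennreal_mass, hμ_mass, ENNReal.coe_one]
  · exact congrArg FiniteMeasure.toMeasure
      (map_eq_self_of_mapClusterPt_empiricalMeasure hf hn.tendsto_atTop hμ)

theorem bddAbove_range_integral_probabilityMeasure (hφ : Continuous φ) :
    BddAbove (Set.range fun μ : ProbabilityMeasure X ↦ ∫ x, φ x ∂(μ : Measure X)) := by
  let Φ : X →ᵇ ℝ := .mkOfCompact ⟨φ, hφ⟩
  refine ⟨‖Φ‖, ?_⟩
  rintro _ ⟨μ, rfl⟩
  exact (le_abs_self _).trans (Φ.norm_integral_le_norm μ)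

theorem birkhoff_average_eventually_le_general [T2Space X] [HasOuterApproxClosed X]
    (hf : Continuous f) (hφ : Continuous φ)
    (hc : (⨆ μ : {μ : Measure X // IsProbabilityMeasure μ ∧ μ.map f = μ},
        ∫ x, φ x ∂(μ : Measure X)) < c) :
    ∀ᶠ n in atTop, ∀ x, birkhoffAverage ℝ f φ n x < c := by
  by_contra h
  simp only [not_eventually, not_forall, not_lt] at h
  obtain ⟨μ, hμ, hμf, hcμ⟩ :=
    exists_invariant_le_integral_of_frequently_le_birkhoffAverage hf hφ h
  have hbdd : BddAbove (Set.range fun ν : {ν : Measure X // IsProbabilityMeasure ν ∧ ν.map f = ν} ↦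
      ∫ x, φ x ∂(ν : Measure X)) :=
    (bddAbove_range_integral_probabilityMeasure hφ).mono <| by
      rintro _ ⟨ν, rfl⟩
      exact ⟨⟨ν, ν.2.1⟩, rfl⟩
  exact (hcμ.trans (le_ciSup hbdd ⟨μ, hμ, hμf⟩)).not_gt hc

end InvariantMeasure

/-- If the maximal ergodic average is `0`, then for every `a > 0` there
is `m₀ ≥ 1` such that all Birkhoff averages of length `m ≥ m₀` are at most `a / 2`. -/
theorem birkhoff_average_eventually_le
    {X : Type*} [MetricSpace X] [CompactSpace X] [Nonempty X]
    [MeasurableSpace X] [BorelSpace X]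
    (f : X → X) (hf : Continuous f) (φ : X → ℝ) (hφ : Continuous φ)
    (hsup : (⨆ μ : {μ : Measure X // IsProbabilityMeasure μ ∧ μ.map f = μ},
        ∫ x, φ x ∂(μ : Measure X)) = 0)
    (a : ℝ) (ha : 0 < a) :
    ∃ m₀ : ℕ, 1 ≤ m₀ ∧ ∀ m : ℕ, m₀ ≤ m → ∀ x : X,
      birkhoffSum f φ m x / m ≤ a / 2 := by
  obtain ⟨m₀, hm₀⟩ := eventually_atTop.1 <| (eventually_ge_atTop 1).and <|
    birkhoff_average_eventually_le_general hf hφ (hsup.trans_lt (half_pos ha))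
  refine ⟨m₀, (hm₀ m₀ le_rfl).1, fun m hm x ↦ ?_⟩
  simpa [birkhoffAverage, div_eq_inv_mul] using ((hm₀ m hm).2 x).le
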